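/- Let X^n = (X₁,…,X_n) be a discrete random vector on finite alphabets and let Y^n be the output of a memoryless erasure channel applied coordinatewise: Y_i = X_i with probability p and Y_i = e otherwise, with erasure indicators B₁,…,B_n i.i.d. Bernoulli(p) independent of X^n. Then I(X^n; Y^n) = p·H(X^n) + (1−p)·∑_{i=1}^n I(X_i; Y_{i+1},…,Y_n | X₁,…,X_{i−1}). -/

import Mathlib

open Real Finset

open scoped Classical in
/-- Probability that the random variable `X` takes the value `a`, under the pmf `f`
on the finite sample space `Ω`. -/
noncomputable def pr {Ω α : Type*} [Fintype Ω] (f : Ω → ℝ) (X : Ω → α) (a : α) : ℝ :=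
  ∑ ω, if X ω = a then f ω else 0

/-- Shannon entropy (natural log) of a random variable `X` on a finite space. -/
noncomputable def ent {Ω α : Type*} [Fintype Ω] [Fintype α] (f : Ω → ℝ) (X : Ω → α) : ℝ :=
  ∑ a, Real.negMulLog (pr f X a)

/-- Mutual information `I(X;Y) = H(X) + H(Y) - H(X,Y)`. -/
noncomputable def mi {Ω α β : Type*} [Fintype Ω] [Fintype α] [Fintype β]
    (f : Ω → ℝ) (X : Ω → α) (Y : Ω → β) : ℝ :=
  ent f X + ent f Y - ent f (fun ω => (X ω, Y ω))

/-- Conditional entropy `H(X|Y) = H(X,Y) - H(Y)`. -/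
noncomputable def condEnt {Ω α β : Type*} [Fintype Ω] [Fintype α] [Fintype β]
    (f : Ω → ℝ) (X : Ω → α) (Y : Ω → β) : ℝ :=
  ent f (fun ω => (X ω, Y ω)) - ent f Y

/-- Conditional mutual information
`I(X;Y|Z) = H(X,Z) + H(Y,Z) - H(X,Y,Z) - H(Z)`. -/
noncomputable def cmi {Ω α β γ : Type*} [Fintype Ω] [Fintype α] [Fintype β] [Fintype γ]
    (f : Ω → ℝ) (X : Ω → α) (Y : Ω → β) (Z : Ω → γ) : ℝ :=
  ent f (fun ω => (X ω, Z ω)) + ent f (fun ω => (Y ω, Z ω))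
    - ent f (fun ω => (X ω, Y ω, Z ω)) - ent f Z

/-! Interpolate between `Yⁿ` and `Xⁿ` through the hybrid vectors `(X₁^{k-1}, Y_k^n)`. If `B_i` is
independent of `(W, X_i)`, then `H(W, Y_i) = h(p) + p H(W, X_i) + (1 - p) H(W)`, where `h` is the
binary entropy. With `W = (X₁^{i-1}, Y_{i+1}^n)` this shows that
`(1 - p) I(X_i; Y_{i+1}^n | X₁^{i-1}) + h(p)` is the increment from `k = i` to `k = i + 1` of
`(1 - p) H(X₁^{k-1}) - H(X₁^{k-1}, Y_k^n)`, so the sum over `i` telescopes. When `X_i` is already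
part of `W`, it shows that adjoining `Y_i` costs `h(p)`, so `H(Xⁿ, Yⁿ) = H(Xⁿ) + n h(p)`. -/

section Law

variable {Ω α β γ : Type*} [Fintype Ω] (f : Ω → ℝ)

theorem pr_eq_pr_of_iff {X : Ω → α} {Z : Ω → β} {a : α} {b : β}
    (h : ∀ ω, X ω = a ↔ Z ω = b) : pr f X a = pr f Z b := by
  classical
  unfold pr
  exact sum_congr rfl fun ω _ => if_congr (h ω) rfl rfl

theorem sum_pr_prodMk [Fintype γ] (U : Ω → α) (C : Ω → γ) (u : α) :
    ∑ c, pr f (fun ω => (U ω, C ω)) (u, c) = pr f U u := by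
  classical
  simp only [pr, Prod.mk.injEq]
  rw [sum_comm]
  refine sum_congr rfl fun ω _ => ?_
  by_cases hu : U ω = u <;> simp [hu]

variable [Fintype α]

theorem sum_pr_mul (X : Ω → α) (g : α → ℝ) : ∑ a, pr f X a * g a = ∑ ω, f ω * g (X ω) := by
  classical
  simp only [pr, Finset.sum_mul, ite_mul, zero_mul]
  rw [sum_comm]
  exact sum_congr rfl fun ω _ => by simp

theorem sum_pr (X : Ω → α) : ∑ a, pr f X a = ∑ ω, f ω := by
  simpa only [mul_one] using sum_pr_mul f X fun _ => 1

open scoped Classical in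
theorem pr_comp (X : Ω → α) (g : α → β) (b : β) :
    pr f (fun ω => g (X ω)) b = ∑ a, if g a = b then pr f X a else 0 := by
  have h := sum_pr_mul f X fun a => if g a = b then 1 else 0
  simp only [mul_ite, mul_one, mul_zero] at h
  exact h.symm

theorem ent_eq_sum_neg_log_pr (X : Ω → α) : ent f X = ∑ ω, f ω * -log (pr f X (X ω)) := by
  simp only [ent, negMulLog, neg_mul_comm]
  exact sum_pr_mul f X fun a => -log (pr f X a)

theorem ent_eq_ent_of_eq_iff_eq [Fintype β] {X : Ω → α} {Z : Ω → β}
    (h : ∀ ω ω', X ω = X ω' ↔ Z ω = Z ω') : ent f X = ent f Z := by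
  simp only [ent_eq_sum_neg_log_pr, fun ω => pr_eq_pr_of_iff f fun ω' => h ω' ω]

end Law

section Erasure

variable {Ω α β γ : Type*} [Fintype Ω] {f : Ω → ℝ} {p : ℝ}

/-- The bit `C` is Bernoulli(`p`) and independent of `U`, as a factorization of the joint law. -/
def IsIndepBernoulli (f : Ω → ℝ) (p : ℝ) (U : Ω → γ) (C : Ω → Bool) : Prop :=
  ∀ u c, pr f (fun ω => (U ω, C ω)) (u, c) = pr f U u * if c then p else 1 - p

theorem IsIndepBernoulli.of_eq_mul {U : Ω → γ} {C : Ω → Bool} (g : γ → ℝ)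
    (h : ∀ u c, pr f (fun ω => (U ω, C ω)) (u, c) = g u * if c then p else 1 - p) :
    IsIndepBernoulli f p U C := by
  intro u c
  have marginal : pr f U u = g u := by
    simp [← sum_pr_prodMk f U C u, h, ← mul_add]
  rw [h, marginal]

theorem IsIndepBernoulli.comp [Finite γ] {U : Ω → γ} {C : Ω → Bool}
    (h : IsIndepBernoulli f p U C) (g : γ → β) : IsIndepBernoulli f p (fun ω => g (U ω)) C := by
  classical
  have := Fintype.ofFinite γ
  intro z c
  rw [pr_comp f (fun ω => (U ω, C ω)) (fun x => (g x.1, x.2)) (z, c), pr_comp f U g z,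
    Fintype.sum_prod_type, Finset.sum_mul]
  refine sum_congr rfl fun u _ => ?_
  by_cases hu : g u = z
  · simp [hu, h u c]
  · simp [hu]

/-- The bits `B i` are i.i.d. Bernoulli(`p`) and jointly independent of `U`, as a factorization of
the joint law. -/
def IsIndepIIDBernoulli {ι : Type*} [Fintype ι] (f : Ω → ℝ) (p : ℝ) (U : Ω → γ)
    (B : ι → Ω → Bool) : Prop :=
  ∀ u b, pr f (fun ω => (U ω, fun i => B i ω)) (u, b) =
    pr f U u * ∏ i, if b i then p else 1 - p

theorem IsIndepIIDBernoulli.isIndepBernoulli {ι : Type*} [Fintype ι]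
    {U : Ω → γ} {B : ι → Ω → Bool} (h : IsIndepIIDBernoulli f p U B) (i : ι) :
    IsIndepBernoulli f p (fun ω => (U ω, fun j : {j // j ≠ i} => B j ω)) (B i) := by
  classical
  refine .of_eq_mul (fun x => pr f U x.1 * ∏ j, if x.2 j then p else 1 - p) fun ⟨u, b⟩ c => ?_
  have split_bits (ω : Ω) : ((U ω, fun j : {j // j ≠ i} => B j ω), B i ω) = ((u, b), c) ↔
      (U ω, fun j => B j ω) = (u, (Equiv.funSplitAt i Bool).symm (c, b)) := by
    simp only [Prod.mk.injEq, Equiv.eq_symm_apply, Equiv.funSplitAt_apply]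
    tauto
  rw [pr_eq_pr_of_iff f split_bits, h, Fintype.prod_eq_mul_prod_subtype_ne _ i]
  have prod_ne : ∏ j : {j // j ≠ i},
        (if (Equiv.funSplitAt i Bool).symm (c, b) j then p else 1 - p) =
      ∏ j, if b j then p else 1 - p :=
    prod_congr rfl fun j _ => by simp [j.2]
  rw [prod_ne]
  simp only [Equiv.funSplitAt_symm_apply, dite_true]
  ring

/-- The output of the erasure channel with input `V`: the symbol is received when the bit `C` is
`true`, and erased, which is encoded by `none`, otherwise. -/
def erasureOutput (V : Ω → α) (C : Ω → Bool) (ω : Ω) : Option α :=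
  if C ω then some (V ω) else none

theorem ent_prodMk_erasureOutput [Fintype α] [Fintype β] (hf : ∑ ω, f ω = 1)
    {W : Ω → α} {V : Ω → β} {C : Ω → Bool}
    (h : IsIndepBernoulli f p (fun ω => (W ω, V ω)) C) :
    ent f (fun ω => (W ω, erasureOutput V C ω)) =
      binEntropy p + p * ent f (fun ω => (W ω, V ω)) + (1 - p) * ent f W := by
  have pr_none (w : α) :
      pr f (fun ω => (W ω, erasureOutput V C ω)) (w, none) = pr f W w * (1 - p) := by
    refine Eq.trans (pr_eq_pr_of_iff f fun ω => ?_) (h.comp Prod.fst w false)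
    simp [erasureOutput]
  have pr_some (w : α) (v : β) : pr f (fun ω => (W ω, erasureOutput V C ω)) (w, some v) =
      pr f (fun ω => (W ω, V ω)) (w, v) * p := by
    refine Eq.trans (pr_eq_pr_of_iff f fun ω => ?_) (h (w, v) true)
    simp [erasureOutput, and_assoc, and_comm]
  have sum_W : ∑ w, pr f W w = 1 := (sum_pr f W).trans hf
  have sum_WV : ∑ w, ∑ v, pr f (fun ω => (W ω, V ω)) (w, v) = 1 := by
    rw [← Fintype.sum_prod_type', sum_pr, hf]
  simp only [ent, Fintype.sum_prod_type, Fintype.sum_option, pr_none, pr_some, negMulLog_mul,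
    sum_add_distrib, ← mul_sum, ← Finset.sum_mul, sum_W, sum_WV,
    binEntropy_eq_negMulLog_add_negMulLog_one_sub]
  ring

end Erasure

theorem sum_sub_Iio_eq_of_isLowerSet {ι M : Type*} [LinearOrder ι] [LocallyFiniteOrderBot ι]
    [AddCommGroup M] (F : Finset ι → M) {s : Finset ι} (hs : IsLowerSet (s : Set ι)) :
    ∑ i ∈ s, (F (Iic i) - F (Iio i)) = F s - F ∅ := by
  induction s using Finset.induction_on_max with
  | empty => simp
  | insert a s ha ih =>
    have s_eq : s = Iio a := by
      ext x
      refine ⟨fun hx => mem_Iio.2 (ha x hx), fun hx => ?_⟩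
      have hxa := mem_Iio.1 hx
      exact mem_of_mem_insert_of_ne (mod_cast hs hxa.le (by simp)) hxa.ne
    subst s_eq
    rw [sum_insert (by simp), ih (by simpa using isLowerSet_Iio a), Iio_insert]
    abel

section Hybrid

variable {Ω ι : Type*} [Fintype Ω] {α β : ι → Type*} [∀ i, Fintype (α i)] [∀ i, Fintype (β i)]

section DecidableEq

variable [DecidableEq ι] (f : Ω → ℝ) (X : ∀ i, Ω → α i) (Y : ∀ i, Ω → β i)

/-- The entropy of the hybrid vector made of the coordinates of `X` in `s` and those of `Y`
in `t`. -/
noncomputable def hybridEnt (s t : Finset ι) : ℝ :=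
  ent f fun ω => ((fun j : s => X j ω), (fun j : t => Y j ω))

theorem hybridEnt_insert_left (i : ι) (s t : Finset ι) :
    hybridEnt f X Y (insert i s) t =
      ent f fun ω => (((fun j : s => X j ω), (fun j : t => Y j ω)), X i ω) := by
  refine ent_eq_ent_of_eq_iff_eq f fun ω ω' => ?_
  simp only [Prod.mk.injEq, funext_iff, Subtype.forall, mem_insert, forall_eq_or_imp]
  tauto

theorem hybridEnt_insert_right (i : ι) (s t : Finset ι) :
    hybridEnt f X Y s (insert i t) =
      ent f fun ω => (((fun j : s => X j ω), (fun j : t => Y j ω)), Y i ω) := by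
  refine ent_eq_ent_of_eq_iff_eq f fun ω ω' => ?_
  simp only [Prod.mk.injEq, funext_iff, Subtype.forall, mem_insert, forall_eq_or_imp]
  tauto

variable {f} in
theorem hybridEnt_empty_empty (hf : ∑ ω, f ω = 1) : hybridEnt f X Y ∅ ∅ = 0 := by
  have : hybridEnt f X Y ∅ ∅ = ent f fun _ => () :=
    ent_eq_ent_of_eq_iff_eq f fun ω ω' => by simp [funext_iff]
  simp [this, ent, pr, hf]

variable [Fintype ι]

theorem hybridEnt_univ_empty : hybridEnt f X Y univ ∅ = ent f fun ω i => X i ω :=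
  ent_eq_ent_of_eq_iff_eq f fun ω ω' => by simp [funext_iff]

theorem hybridEnt_empty_univ : hybridEnt f X Y ∅ univ = ent f fun ω i => Y i ω :=
  ent_eq_ent_of_eq_iff_eq f fun ω ω' => by simp [funext_iff]

theorem hybridEnt_univ_univ :
    hybridEnt f X Y univ univ = ent f fun ω => (fun i => X i ω, fun i => Y i ω) :=
  ent_eq_ent_of_eq_iff_eq f fun ω ω' => by simp [funext_iff]

theorem mi_eq_hybridEnt :
    mi f (fun ω i => X i ω) (fun ω i => Y i ω) =
      hybridEnt f X Y univ ∅ + hybridEnt f X Y ∅ univ - hybridEnt f X Y univ univ := by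
  rw [mi, hybridEnt_univ_empty, hybridEnt_empty_univ, hybridEnt_univ_univ]

variable {f X} {p : ℝ} {B : ι → Ω → Bool}

theorem hybridEnt_insert_erasureOutput (hf : ∑ ω, f ω = 1)
    (h : IsIndepIIDBernoulli f p (fun ω i => X i ω) B) {i : ι} (s : Finset ι) {t : Finset ι}
    (hi : i ∉ t) :
    hybridEnt f X (fun j => erasureOutput (X j) (B j)) s (insert i t) =
      binEntropy p + p * hybridEnt f X (fun j => erasureOutput (X j) (B j)) (insert i s) t
        + (1 - p) * hybridEnt f X (fun j => erasureOutput (X j) (B j)) s t := by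
  rw [hybridEnt_insert_left, hybridEnt_insert_right]
  exact ent_prodMk_erasureOutput hf ((h.isIndepBernoulli i).comp fun x =>
    (((fun j : s => x.1 j),
      (fun j : t => if x.2 ⟨j, ne_of_mem_of_not_mem j.2 hi⟩ then some (x.1 j) else none)), x.1 i))

theorem hybridEnt_erasureOutput_of_subset (hf : ∑ ω, f ω = 1)
    (h : IsIndepIIDBernoulli f p (fun ω i => X i ω) B) {s t : Finset ι} (hts : t ⊆ s) :
    hybridEnt f X (fun j => erasureOutput (X j) (B j)) s t =
      hybridEnt f X (fun j => erasureOutput (X j) (B j)) s ∅ + #t * binEntropy p := by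
  induction t using Finset.induction with
  | empty => simp
  | insert i t hi ih =>
    obtain ⟨his, hts⟩ := insert_subset_iff.1 hts
    rw [hybridEnt_insert_erasureOutput hf h s hi, insert_eq_of_mem his, ih hts,
      card_insert_of_notMem hi]
    push_cast
    ring

end DecidableEq

section LinearOrder

variable [LinearOrder ι] [Fintype ι] [LocallyFiniteOrderBot ι] [LocallyFiniteOrderTop ι]

theorem cmi_eq_hybridEnt (f : Ω → ℝ) (X : ∀ i, Ω → α i) (Y : ∀ i, Ω → β i) (i : ι) :
    cmi f (X i) (fun ω (j : {j // i < j}) => Y j ω) (fun ω (j : {j // j < i}) => X j ω) =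
      hybridEnt f X Y (Iic i) ∅ + hybridEnt f X Y (Iio i) (Ioi i)
        - hybridEnt f X Y (Iic i) (Ioi i) - hybridEnt f X Y (Iio i) ∅ := by
  have ent_X : ent f (fun ω (j : {j // j < i}) => X j ω) = hybridEnt f X Y (Iio i) ∅ :=
    ent_eq_ent_of_eq_iff_eq f fun ω ω' => by simp [funext_iff]
  have ent_X_X : ent f (fun ω => (X i ω, fun j : {j // j < i} => X j ω)) =
      hybridEnt f X Y (Iic i) ∅ := by
    rw [← Iio_insert, hybridEnt_insert_left]
    exact ent_eq_ent_of_eq_iff_eq f fun ω ω' => by simp [funext_iff, and_comm]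
  have ent_Y_X : ent f (fun ω => (fun j : {j // i < j} => Y j ω, fun j : {j // j < i} => X j ω)) =
      hybridEnt f X Y (Iio i) (Ioi i) :=
    ent_eq_ent_of_eq_iff_eq f fun ω ω' => by simp [funext_iff, and_comm]
  have ent_X_Y_X : ent f (fun ω => (X i ω, fun j : {j // i < j} => Y j ω,
      fun j : {j // j < i} => X j ω)) = hybridEnt f X Y (Iic i) (Ioi i) := by
    rw [← Iio_insert, hybridEnt_insert_left]
    refine ent_eq_ent_of_eq_iff_eq f fun ω ω' => ?_
    simp only [Prod.mk.injEq, funext_iff, Subtype.forall, mem_Iio, mem_Ioi]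
    tauto
  rw [cmi, ent_X_X, ent_Y_X, ent_X_Y_X, ent_X]

variable {f : Ω → ℝ} {p : ℝ} {X : ∀ i, Ω → α i} {B : ι → Ω → Bool}

theorem one_sub_mul_sum_cmi_erasureOutput (hf : ∑ ω, f ω = 1)
    (h : IsIndepIIDBernoulli f p (fun ω i => X i ω) B) :
    (1 - p) * ∑ i, cmi f (X i) (fun ω (j : {j // i < j}) => erasureOutput (X j) (B j) ω)
        (fun ω (j : {j // j < i}) => X j ω) =
      hybridEnt f X (fun j => erasureOutput (X j) (B j)) ∅ univ
        - p * hybridEnt f X (fun j => erasureOutput (X j) (B j)) univ ∅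
        - Fintype.card ι * binEntropy p := by
  set H := hybridEnt f X fun j => erasureOutput (X j) (B j) with H_def
  let F (s : Finset ι) : ℝ := (1 - p) * H s ∅ - H s sᶜ
  have increment (i : ι) :
      (1 - p) * cmi f (X i) (fun ω (j : {j // i < j}) => erasureOutput (X j) (B j) ω)
        (fun ω (j : {j // j < i}) => X j ω) = F (Iic i) - F (Iio i) - binEntropy p := by
    have step : H (Iio i) (Iio i)ᶜ =
        binEntropy p + p * H (Iic i) (Ioi i) + (1 - p) * H (Iio i) (Ioi i) := by
      have compl_Iio : (Iio i)ᶜ = insert i (Ioi i) := by ext; simp [le_iff_eq_or_lt]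
      rw [compl_Iio, ← Iio_insert]
      exact hybridEnt_insert_erasureOutput hf h (Iio i) (by simp)
    have compl_Iic : (Iic i)ᶜ = Ioi i := by ext; simp
    rw [cmi_eq_hybridEnt f X fun j => erasureOutput (X j) (B j)]
    simp only [F, step, compl_Iic]
    ring
  have telescope : ∑ i, (F (Iic i) - F (Iio i)) = F univ - F ∅ :=
    sum_sub_Iio_eq_of_isLowerSet F (by simpa using isLowerSet_univ)
  rw [mul_sum, sum_congr rfl fun i _ => increment i, sum_sub_distrib, telescope]
  simp only [F, H_def, hybridEnt_empty_empty X _ hf, compl_univ, compl_empty, sum_const,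
    card_univ, nsmul_eq_mul]
  ring

end LinearOrder

end Hybrid

/-- For a coordinatewise memoryless erasure channel,
`I(Xⁿ;Yⁿ) = p H(Xⁿ) + (1-p) ∑ᵢ I(Xᵢ; Y_{i+1}ⁿ | X₁^{i-1})`. -/
theorem erasure_vector_mi_identity {Ω : Type*} [Fintype Ω] {n : ℕ} {α : Fin n → Type*}
    [∀ i, Fintype (α i)]
    (f : Ω → ℝ) (hf0 : ∀ ω, 0 ≤ f ω) (hf1 : ∑ ω, f ω = 1)
    (p : ℝ) (X : ∀ i, Ω → α i) (B : Fin n → Ω → Bool)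
    (hind : ∀ (a : ∀ i, α i) (b : Fin n → Bool),
      pr f (fun ω => (fun i => X i ω, fun i => B i ω)) (a, b)
        = pr f (fun ω i => X i ω) a * ∏ i, (if b i then p else 1 - p))
    (Y : ∀ i, Ω → Option (α i)) (hY : ∀ i ω, Y i ω = if B i ω then some (X i ω) else none) :
    mi f (fun ω i => X i ω) (fun ω i => Y i ω)
      = p * ent f (fun ω i => X i ω)
        + (1 - p) * ∑ i, cmi f (X i)
            (fun ω => fun j : {j : Fin n // i < j} => Y j.1 ω)
            (fun ω => fun j : {j : Fin n // j < i} => X j.1 ω) := by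
  obtain rfl : Y = fun i => erasureOutput (X i) (B i) := funext fun i => funext (hY i)
  have h : IsIndepIIDBernoulli f p (fun ω i => X i ω) B := hind
  have hXY := hybridEnt_erasureOutput_of_subset hf1 h (subset_univ univ)
  rw [one_sub_mul_sum_cmi_erasureOutput hf1 h, mi_eq_hybridEnt, hXY,
    ← hybridEnt_univ_empty f X fun i => erasureOutput (X i) (B i), card_univ]
  ring
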